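/- In the setting of the preceding data (finite nonempty types S, A; kernel F; positive prior p; policy π; reward r; 0 ≤ γ < 1; α_attk > 0; α_ent ∈ ℝ; f : ℝ → ℝ convex with f 1 = 0; H(s̃) = −∑_a π s̃ a * Real.log (π s̃ a); V_Q(s, s̃) = ∑_a π s̃ a * Q s a + α_ent * H(s̃); W_s(v) = ⨅ over probability vectors ν of ( ∑_{s̃} ν s̃ * v s̃ + α_attk * ∑_{s̃} p s s̃ * f (ν s̃ / p s s̃) ); M_s(u) = ⨆ over probability vectors ν of ( ∑_{s̃} ν s̃ * u s̃ − α_attk * ∑_{s̃} p s s̃ * f (ν s̃ / p s s̃) ); (T_ag Q)(s,a) = r s a + γ * ∑_{s'} F s a s' * W_{s'}(V_Q(s',·)); c(s,s̃) = ∑_a π s̃ a * (−r s a); G(s,s̃,s') = ∑_a π s̃ a * F s a s'; (T_adv Q)(s,s̃) = c(s,s̃) + γ * ∑_{s'} G(s,s̃,s') * M_{s'}(fun s̃' => Q s' s̃' − α_ent * H(s̃'))), suppose Q* : S → A → ℝ is a fixed point of the agent operator, T_ag Q* = Q*. Define Q° : S → S → ℝ by Q°(s, s̃) = ∑_a π s̃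 a * (−Q*(s, a)). Then Q° is a fixed point of the adversary operator, T_adv Q° = Q°, and for every state s the optimal values have opposite signs: M_s( fun s̃ => Q°(s, s̃) − α_ent * H(s̃) ) = − W_s( fun s̃ => V_{Q*}(s, s̃) ). -/

import Mathlib

/-! Every payoff of the adversary is the negative of the corresponding payoff of the agent, so its
soft-optimal value is the negative of the agent's soft-worst value. As averaging over the policy
is linear, `Q ↦ adversaryValue π Q` therefore intertwines the two Bellman operators and maps fixed
points to fixed points. By Jensen's inequality the `f`-divergence is nonnegative, so the infimum
and supremum over the simplex are genuine bounds and not junk values. -/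

open Matrix Set

theorem isLUB_image_dotProduct_neg_sub {R O : Type*} [NonUnitalNonAssocRing R] [PartialOrder R]
    [IsOrderedAddMonoid R] [Fintype O] {N : Set (O → R)} {D : (O → R) → R} {v : O → R} {w : R}
    (h : IsGLB ((fun ν => ν ⬝ᵥ v + D ν) '' N) w) :
    IsLUB ((fun ν => ν ⬝ᵥ -v - D ν) '' N) (-w) := by
  have h_image : (fun ν => ν ⬝ᵥ -v - D ν) '' N = -((fun ν => ν ⬝ᵥ v + D ν) '' N) := by
    rw [← image_neg_eq_neg, image_image]
    simp only [dotProduct_neg, neg_add']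
  rw [h_image]
  exact h.neg

section Bellman

variable {S O A : Type*} [Fintype A]

/-- The adversary's action-value function induced by an action-value function of the agent: the
adversary acts by choosing the observation in `O` shown to the agent. -/
def adversaryValue (π : Matrix O A ℝ) (Q : S → A → ℝ) : S → O → ℝ :=
  fun s => π *ᵥ (-Q s)

theorem adversaryValue_sub (π : Matrix O A ℝ) (η : O → ℝ) (Q : S → A → ℝ) (s : S) :
    adversaryValue π Q s - η = -(π *ᵥ Q s + η) := by
  rw [adversaryValue, mulVec_neg, neg_add']

variable [Fintype S]

/-- The agent's Bellman operator for the transition matrices `F s`, the policy `π` acting on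
observations, the reward `r`, the discount `γ` and the regularizer `η` (the paper has
`η = αent • H`). `W s` turns the values of the observations available to the adversary in state
`s` into a value of `s`. -/
def agentBellman (F : S → Matrix A S ℝ) (π : Matrix O A ℝ) (r : S → A → ℝ) (γ : ℝ) (η : O → ℝ)
    (W : S → (O → ℝ) → ℝ) (Q : S → A → ℝ) : S → A → ℝ :=
  fun s => r s + γ • F s *ᵥ fun s' => W s' (π *ᵥ Q s' + η)

/-- The adversary's Bellman operator: its reward is `adversaryValue π r`, its transition matrices
are `π * F s`, and `M s` turns its values of the observations into a value of `s`. -/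
def adversaryBellman (F : S → Matrix A S ℝ) (π : Matrix O A ℝ) (r : S → A → ℝ) (γ : ℝ)
    (η : O → ℝ) (M : S → (O → ℝ) → ℝ) (Q : S → O → ℝ) : S → O → ℝ :=
  fun s => adversaryValue π r s + γ • (π * F s) *ᵥ fun s' => M s' (Q s' - η)

theorem adversaryBellman_adversaryValue (F : S → Matrix A S ℝ) (π : Matrix O A ℝ)
    (r : S → A → ℝ) (γ : ℝ) (η : O → ℝ) {W M : S → (O → ℝ) → ℝ}
    (h : ∀ s v, M s (-v) = -W s v) (Q : S → A → ℝ) :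
    adversaryBellman F π r γ η M (adversaryValue π Q) =
      adversaryValue π (agentBellman F π r γ η W Q) := by
  funext s
  let w : S → ℝ := fun s' => W s' (π *ᵥ Q s' + η)
  have h_next : (fun s' => M s' (adversaryValue π Q s' - η)) = -w := by
    funext s'
    rw [adversaryValue_sub, h, Pi.neg_apply]
  calc adversaryBellman F π r γ η M (adversaryValue π Q) s
      = π *ᵥ (-r s) + γ • (π * F s) *ᵥ (-w) := by
        rw [adversaryBellman, h_next, adversaryValue]
    _ = π *ᵥ (-r s) + π *ᵥ (γ • F s *ᵥ (-w)) := by rw [← mulVec_mulVec, mulVec_smul]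
    _ = π *ᵥ (-(r s + γ • F s *ᵥ w)) := by rw [← mulVec_add, mulVec_neg, smul_neg, neg_add]

theorem valt_shared_fixed_points_opposite_signs_general [Fintype O] (F : S → Matrix A S ℝ)
    (π : Matrix O A ℝ) (r : S → A → ℝ) (γ : ℝ) (η : O → ℝ) (N : S → Set (O → ℝ))
    (D : S → (O → ℝ) → ℝ) {W M : S → (O → ℝ) → ℝ}
    (hW : ∀ s v, IsGLB ((fun ν => ν ⬝ᵥ v + D s ν) '' N s) (W s v))
    (hM : ∀ s u, IsLUB ((fun ν => ν ⬝ᵥ u - D s ν) '' N s) (M s u))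
    {Q : S → A → ℝ} (hQ : agentBellman F π r γ η W Q = Q) :
    adversaryBellman F π r γ η M (adversaryValue π Q) = adversaryValue π Q ∧
      ∀ s, M s (adversaryValue π Q s - η) = -W s (π *ᵥ Q s + η) := by
  have h_dual (s : S) (v : O → ℝ) : M s (-v) = -W s v :=
    (hM s (-v)).unique (isLUB_image_dotProduct_neg_sub (hW s v))
  refine ⟨?_, fun s => ?_⟩
  · rw [adversaryBellman_adversaryValue F π r γ η h_dual, hQ]
  · rw [adversaryValue_sub, h_dual]

end Bellman

section FDivergence

variable {O : Type*} [Fintype O]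

/-- The `f`-divergence of `ν` from `p` on a finite type, for use with `p` positive: a summand with
`p t = 0` is `0` whatever `ν t` is. -/
noncomputable def finiteFDiv (f : ℝ → ℝ) (ν p : O → ℝ) : ℝ :=
  ∑ t, p t * f (ν t / p t)

variable {f : ℝ → ℝ} {p : O → ℝ} {α : ℝ}

theorem finiteFDiv_nonneg (hf : ConvexOn ℝ (Ici 0) f) (hf1 : f 1 = 0) (hp0 : ∀ t, 0 < p t)
    (hp1 : ∑ t, p t = 1) {ν : O → ℝ} (hν : ν ∈ stdSimplex ℝ O) : 0 ≤ finiteFDiv f ν p := by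
  have h_mean : ∑ t, p t • (ν t / p t) = 1 := by
    simpa only [smul_eq_mul, mul_div_cancel₀ _ (hp0 _).ne'] using hν.2
  calc 0 = f (∑ t, p t • (ν t / p t)) := by rw [h_mean, hf1]
    _ ≤ ∑ t, p t • f (ν t / p t) :=
      hf.map_sum_le (fun t _ => (hp0 t).le) hp1 fun t _ => div_nonneg (hν.1 t) (hp0 t).le

theorem isGLB_dotProduct_add_finiteFDiv (hα : 0 ≤ α) (hf : ConvexOn ℝ (Ici 0) f)
    (hf1 : f 1 = 0) (hp0 : ∀ t, 0 < p t) (hp1 : ∑ t, p t = 1) (v : O → ℝ) :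
    IsGLB ((fun ν => ν ⬝ᵥ v + α * finiteFDiv f ν p) '' stdSimplex ℝ O)
      (⨅ ν : stdSimplex ℝ O, (ν.1 ⬝ᵥ v + α * finiteFDiv f ν.1 p)) := by
  refine isGLB_ciInf_set ?_ ⟨p, fun t => (hp0 t).le, hp1⟩
  obtain ⟨b, hb⟩ : BddBelow ((fun ν => ν ⬝ᵥ v) '' stdSimplex ℝ O) :=
    ((isCompact_stdSimplex ℝ O).image (by fun_prop)).bddBelow
  refine ⟨b, forall_mem_image.2 fun ν hν => ?_⟩
  exact le_add_of_le_of_nonneg (hb (mem_image_of_mem _ hν))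
    (mul_nonneg hα (finiteFDiv_nonneg hf hf1 hp0 hp1 hν))

theorem isLUB_dotProduct_sub_finiteFDiv (hα : 0 ≤ α) (hf : ConvexOn ℝ (Ici 0) f)
    (hf1 : f 1 = 0) (hp0 : ∀ t, 0 < p t) (hp1 : ∑ t, p t = 1) (u : O → ℝ) :
    IsLUB ((fun ν => ν ⬝ᵥ u - α * finiteFDiv f ν p) '' stdSimplex ℝ O)
      (⨆ ν : stdSimplex ℝ O, (ν.1 ⬝ᵥ u - α * finiteFDiv f ν.1 p)) := by
  refine isLUB_ciSup_set ?_ ⟨p, fun t => (hp0 t).le, hp1⟩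
  have h_lub := isLUB_image_dotProduct_neg_sub
    (isGLB_dotProduct_add_finiteFDiv hα hf hf1 hp0 hp1 (-u))
  rw [neg_neg] at h_lub
  exact h_lub.bddAbove

end FDivergence

/-- Fixed-point conclusion of the paper's Theorem 3.3: the agent's soft-worst
Bellman operator and the adversary's soft-optimal Bellman operator share fixed
points with opposite signs. -/
theorem valt_shared_fixed_points_opposite_signs
    {S A : Type*} [Fintype S] [Nonempty S] [Fintype A] [Nonempty A]
    (F : S → A → S → ℝ) (hF0 : ∀ s a s', 0 ≤ F s a s')
    (hF1 : ∀ s a, ∑ s', F s a s' = 1)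
    (p : S → S → ℝ) (hp0 : ∀ s t, 0 < p s t) (hp1 : ∀ s, ∑ t, p s t = 1)
    (π : S → A → ℝ) (hπ0 : ∀ t a, 0 ≤ π t a) (hπ1 : ∀ t, ∑ a, π t a = 1)
    (r : S → A → ℝ) (γ : ℝ) (hγ0 : 0 ≤ γ) (hγ1 : γ < 1)
    (αattk αent : ℝ) (hαattk : 0 < αattk)
    (f : ℝ → ℝ) (hf : ConvexOn ℝ Set.univ f) (hf1 : f 1 = 0)
    (H : S → ℝ) (hH : ∀ t, H t = -∑ a, π t a * Real.log (π t a))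
    (V : (S → A → ℝ) → S → S → ℝ)
    (hV : ∀ Q s t, V Q s t = (∑ a, π t a * Q s a) + αent * H t)
    (W : S → (S → ℝ) → ℝ)
    (hW : ∀ s v, W s v =
      ⨅ ν : {w : S → ℝ // (∀ t, 0 ≤ w t) ∧ ∑ t, w t = 1},
        ((∑ t, ν.1 t * v t) + αattk * ∑ t, p s t * f (ν.1 t / p s t)))
    (M : S → (S → ℝ) → ℝ)
    (hM : ∀ s u, M s u =
      ⨆ ν : {w : S → ℝ // (∀ t, 0 ≤ w t) ∧ ∑ t, w t = 1},
        ((∑ t, ν.1 t * u t) - αattk * ∑ t, p s t * f (ν.1 t / p s t)))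
    (Tag : (S → A → ℝ) → S → A → ℝ)
    (hTag : ∀ Q s a, Tag Q s a =
      r s a + γ * ∑ s', F s a s' * W s' (fun t => V Q s' t))
    (c : S → S → ℝ) (hc : ∀ s t, c s t = ∑ a, π t a * (-r s a))
    (G : S → S → S → ℝ) (hG : ∀ s t s', G s t s' = ∑ a, π t a * F s a s')
    (Tadv : (S → S → ℝ) → S → S → ℝ)
    (hTadv : ∀ Q s t, Tadv Q s t = c s t + γ * ∑ s', G s t s' *
      M s' (fun t' => Q s' t' - αent * H t'))
    (Qstar : S → A → ℝ) (hQstar : Tag Qstar = Qstar)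
    (Qcirc : S → S → ℝ)
    (hQcirc : ∀ s t, Qcirc s t = ∑ a, π t a * (-Qstar s a)) :
    Tadv Qcirc = Qcirc ∧
      ∀ s, M s (fun t => Qcirc s t - αent * H t) =
        -W s (fun t => V Qstar s t) := by
  have hf_Ici := hf.subset (subset_univ _) (convex_Ici 0)
  obtain rfl : V = fun Q s => π *ᵥ Q s + αent • H := by funext Q s t; exact hV Q s t
  obtain rfl : Qcirc = adversaryValue π Qstar := by funext s t; exact hQcirc s t
  obtain rfl : Tag = agentBellman F π r γ (αent • H) W := by funext Q s a; exact hTag Q s a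
  obtain rfl : Tadv = adversaryBellman F π r γ (αent • H) M := by
    funext Q s t; simp only [hTadv, hc, hG]; rfl
  exact valt_shared_fixed_points_opposite_signs_general F π r γ (αent • H)
    (fun _ => stdSimplex ℝ S) (fun s ν => αattk * finiteFDiv f ν (p s))
    (fun s v => hW s v ▸
      isGLB_dotProduct_add_finiteFDiv hαattk.le hf_Ici hf1 (hp0 s) (hp1 s) v)
    (fun s u => hM s u ▸
      isLUB_dotProduct_sub_finiteFDiv hαattk.le hf_Ici hf1 (hp0 s) (hp1 s) u) hQstar
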